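/- Two-dimensional early-time Duhamel estimate: fix 2 < r < ∞ and set q = 2r/(r−2). For any t > 0, any measurable interval I ⊆ [0, t/2], and any measurable u : I × ℝ² → ℂ, one has ‖ ∫_I e^{i(t−s)Δ} (|u|²u)(s) ds ‖_{L^r_x(ℝ²)} ≤ C t^{−2(1/2−1/r)} ( sup_{s ∈ I} s^{2(1/2−1/r)} ‖u(s)‖_{L^r_x(ℝ²)} ) ‖u‖²_{L^{r,2}_s L^q_x(I×ℝ²)}, with C depending only on r. -/

import Mathlib

open MeasureTheory Set
open scoped ENNReal Real

noncomputable section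

/-- The free Schrödinger propagator `e^{itΔ}` acting on functions on a `d`-dimensional space:
for `t ≠ 0`, `(e^{itΔ}f)(x) = (4πit)^{-d/2} ∫ e^{i|x-y|²/(4t)} f(y) dy`, and `e^{i0Δ}f = f`. -/
def schrod {E : Type*} [NormedAddCommGroup E] [MeasureSpace E] (d : ℕ) (t : ℝ) (f : E → ℂ) :
    E → ℂ :=
  if t = 0 then f
  else fun x =>
    (4 * (Real.pi : ℂ) * Complex.I * (t : ℂ)) ^ (-(d : ℂ) / 2) *
      ∫ y, Complex.exp (Complex.I * ((‖x - y‖ ^ 2 : ℝ) : ℂ) / (4 * (t : ℂ))) * f y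

/-- Mixed Lebesgue norm `‖u‖_{L^p_t L^q_x (I × space)}`. -/
def mixedNorm {α : Type*} [MeasurableSpace α] (ν : Measure α) (I : Set ℝ) (p q : ℝ≥0∞)
    (u : ℝ → α → ℂ) : ℝ≥0∞ :=
  if p = ∞ then essSup (fun t => eLpNorm (u t) q ν) (volume.restrict I)
  else (∫⁻ t in I, eLpNorm (u t) q ν ^ p.toReal) ^ (1 / p.toReal)

/-- Lorentz quasinorm `p^{1/q} ‖ λ · ν({g > λ})^{1/p} ‖_{L^q((0,∞), dλ/λ)}`
for an `ℝ≥0∞`-valued function `g`. -/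
def lorentzNorm {α : Type*} [MeasurableSpace α] (ν : Measure α) (p q : ℝ≥0∞)
    (g : α → ℝ≥0∞) : ℝ≥0∞ :=
  if q = ∞ then
    ⨆ l ∈ Set.Ioi (0 : ℝ), ENNReal.ofReal l * ν {x | ENNReal.ofReal l < g x} ^ p⁻¹.toReal
  else
    (p * ∫⁻ l in Set.Ioi (0 : ℝ),
        (ENNReal.ofReal l * ν {x | ENNReal.ofReal l < g x} ^ p⁻¹.toReal) ^ q.toReal /
          ENNReal.ofReal l) ^ q⁻¹.toReal

/-- Lorentz quasinorm `‖f‖_{L^{p,q}}` of a scalar function. -/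
def lorentzNormC {α : Type*} [MeasurableSpace α] (ν : Measure α) (p q : ℝ≥0∞)
    (f : α → ℂ) : ℝ≥0∞ :=
  lorentzNorm ν p q fun x => (‖f x‖₊ : ℝ≥0∞)

/-- Lorentz-in-time mixed norm `‖u‖_{L^{p,q}_t L^r_x (I × space)}`. -/
def lorentzMixedNorm {α : Type*} [MeasurableSpace α] (ν : Measure α) (I : Set ℝ)
    (p q r : ℝ≥0∞) (u : ℝ → α → ℂ) : ℝ≥0∞ :=
  lorentzNorm (volume.restrict I) p q fun t => eLpNorm (u t) r ν

/-- The nonlinearity `|f|^a f`. -/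
def nonlin {E : Type*} (a : ℝ) (f : E → ℂ) : E → ℂ := fun x => ((‖f x‖ ^ a : ℝ) : ℂ) * f x

/-!
The Fourier transform maps `L^{r'}` to `L^r` by interpolating between `L¹ → L^∞` and Plancherel:
at height `l` the function is cut so that one piece has `L¹` norm at most `l/2`. Completing the
square writes `e^{itΔ}` as a chirp, a rescaled Fourier transform and another chirp, which turns this
into the dispersive bound with decay `|t|^{-δ}`, `δ = d (1/2 - 1/r)`.

By Minkowski's inequality the Duhamel integral is at most the time integral of that bound applied
to `|u|^a u`. For `s ≤ t/2` the decay factor is comparable to `t^{-δ}`; with `q = ar/(r-2)`, Hölder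
in space leaves `‖u(s)‖_r ‖u(s)‖_q^a`, and `‖u(s)‖_r` is at most `s^{-δ}` times the weighted
supremum. The integral of `s^{-δ} ‖u(s)‖_q^a` pairs `s^{-δ}`, which lies in weak `L^{1/δ}`, with a
function whose `a`-th root lies in `L^{a/(1-δ),a}`; the layer cake formula bounds it.
-/

lemma eLpNorm_ofReal_eq_lintegral_rpow_enorm {α ε : Type*} [MeasurableSpace α]
    [TopologicalSpace ε] [ContinuousENorm ε] {μ : Measure α} (f : α → ε) {p : ℝ} (hp : 0 < p) :
    eLpNorm f (ENNReal.ofReal p) μ = (∫⁻ x, ‖f x‖ₑ ^ p ∂μ) ^ p⁻¹ := by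
  rw [eLpNorm_eq_lintegral_rpow_enorm_toReal (ENNReal.ofReal_pos.2 hp).ne' ENNReal.ofReal_ne_top,
    ENNReal.toReal_ofReal hp.le, one_div]

section LayerCake

lemma lintegral_Ioc_rpow_sub_one {a b : ℝ} (ha : 0 < a) (hb : 0 ≤ b) :
    ∫⁻ l in Ioc 0 b, ENNReal.ofReal (l ^ (a - 1)) = ENNReal.ofReal (b ^ a / a) := by
  have hint : IntervalIntegrable (fun l : ℝ => l ^ (a - 1)) volume 0 b :=
    intervalIntegral.intervalIntegrable_rpow' (by linarith)
  rw [← ofReal_integral_eq_lintegral_ofReal]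
  · rw [← intervalIntegral.integral_of_le hb, integral_rpow (Or.inl (by linarith))]
    simp [Real.zero_rpow ha.ne']
  · exact (intervalIntegrable_iff_integrableOn_Ioc_of_le hb).1 hint
  · filter_upwards [self_mem_ae_restrict measurableSet_Ioc] with l hl
    exact Real.rpow_nonneg hl.1.le _

lemma lintegral_Ioc_mul_rpow_sub_one {a b : ℝ} (ha : 0 < a) (hb : 0 ≤ b) :
    ∫⁻ l in Ioc 0 b, ENNReal.ofReal (a * l ^ (a - 1)) = ENNReal.ofReal b ^ a := by
  simp_rw [ENNReal.ofReal_mul ha.le]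
  rw [lintegral_const_mul _ (by fun_prop), lintegral_Ioc_rpow_sub_one ha hb,
    ← ENNReal.ofReal_mul ha.le, mul_div_cancel₀ _ ha.ne', ENNReal.ofReal_rpow_of_nonneg hb ha.le]

lemma rpow_eq_lintegral_indicator_lt (c : ℝ≥0∞) {a : ℝ} (ha : 0 < a) :
    c ^ a = ∫⁻ l in Ioi (0 : ℝ),
      {l : ℝ | ENNReal.ofReal l < c}.indicator (fun l => ENNReal.ofReal (a * l ^ (a - 1))) l := by
  have hmeas : MeasurableSet {l : ℝ | ENNReal.ofReal l < c} :=
    measurableSet_lt ENNReal.measurable_ofReal measurable_const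
  rw [lintegral_indicator hmeas, Measure.restrict_restrict hmeas]
  obtain rfl | hc := eq_or_ne c ∞
  · have hset : {l : ℝ | ENNReal.ofReal l < ∞} ∩ Ioi 0 = Ioi 0 := by
      ext l; simp
    rw [hset, ENNReal.top_rpow_of_pos ha, eq_comm, ← top_le_iff]
    refine ENNReal.le_of_forall_nnreal_lt fun b _ => ?_
    calc (b : ℝ≥0∞) = ENNReal.ofReal ((b : ℝ) ^ a⁻¹) ^ a := by
          rw [ENNReal.ofReal_rpow_of_nonneg (by positivity) ha.le,
            Real.rpow_inv_rpow b.coe_nonneg ha.ne', ENNReal.ofReal_coe_nnreal]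
      _ = ∫⁻ l in Ioc (0 : ℝ) ((b : ℝ) ^ a⁻¹), ENNReal.ofReal (a * l ^ (a - 1)) :=
          (lintegral_Ioc_mul_rpow_sub_one ha (by positivity)).symm
      _ ≤ ∫⁻ l in Ioi (0 : ℝ), ENNReal.ofReal (a * l ^ (a - 1)) :=
          lintegral_mono_set Ioc_subset_Ioi_self
  · have hset : {l : ℝ | ENNReal.ofReal l < c} ∩ Ioi 0 = Ioo 0 c.toReal := by
      ext l
      exact ⟨fun ⟨h1, h2⟩ => ⟨h2, (ENNReal.ofReal_lt_iff_lt_toReal (le_of_lt h2) hc).1 h1⟩,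
        fun ⟨h1, h2⟩ => ⟨(ENNReal.ofReal_lt_iff_lt_toReal h1.le hc).2 h2, h1⟩⟩
    rw [hset, setLIntegral_congr Ioo_ae_eq_Ioc,
      lintegral_Ioc_mul_rpow_sub_one ha ENNReal.toReal_nonneg, ENNReal.ofReal_toReal hc]

variable {α : Type*} [MeasurableSpace α] {μ : Measure α} [SFinite μ]

theorem lintegral_mul_rpow_eq_lintegral_Ioi {w g : α → ℝ≥0∞} (hw : Measurable w)
    (hg : Measurable g) {a : ℝ} (ha : 0 < a) :
    ∫⁻ x, w x * g x ^ a ∂μ = ∫⁻ l in Ioi (0 : ℝ),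
      ENNReal.ofReal (a * l ^ (a - 1)) * ∫⁻ x in {x | ENNReal.ofReal l < g x}, w x ∂μ := by
  set G : α × ℝ → ℝ≥0∞ := {z | ENNReal.ofReal z.2 < g z.1}.indicator
    fun z => w z.1 * ENNReal.ofReal (a * z.2 ^ (a - 1)) with hG
  have hGmeas : Measurable G :=
    Measurable.indicator (by fun_prop) (measurableSet_lt (by fun_prop) (by fun_prop))
  calc ∫⁻ x, w x * g x ^ a ∂μ
      = ∫⁻ x, (∫⁻ l in Ioi (0 : ℝ), G (x, l)) ∂μ := by
        refine lintegral_congr fun x => ?_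
        rw [rpow_eq_lintegral_indicator_lt _ ha, ← lintegral_const_mul _
          (Measurable.indicator (by fun_prop) (measurableSet_lt (by fun_prop) (by fun_prop)))]
        simp only [hG, indicator_apply, mem_ofPred_eq, mul_ite, mul_zero]
    _ = ∫⁻ l in Ioi (0 : ℝ), ∫⁻ x, G (x, l) ∂μ :=
        lintegral_lintegral_swap hGmeas.aemeasurable
    _ = _ := by
        refine lintegral_congr fun l => ?_
        have hl : MeasurableSet {x | ENNReal.ofReal l < g x} := measurableSet_lt (by fun_prop) hg
        rw [← lintegral_indicator hl, ← lintegral_const_mul _ (hw.indicator hl)]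
        simp only [hG, indicator_apply, mem_ofPred_eq, mul_ite, mul_zero, mul_comm (w _)]

end LayerCake

section Minkowski

variable {α β : Type*} [MeasurableSpace α] [MeasurableSpace β] {μ : Measure α} {ν : Measure β}

lemma rpow_lintegral_le_lintegral_rpow_mul {f a : α → ℝ≥0∞} (hf : AEMeasurable f μ)
    (ha : AEMeasurable a μ) (hzero : ∀ᵐ x ∂μ, a x = 0 → f x = 0) (htop : ∀ᵐ x ∂μ, a x ≠ ∞)
    {p : ℝ} (hp : 1 ≤ p) :
    (∫⁻ x, f x ∂μ) ^ p ≤ (∫⁻ x, f x ^ p * a x ^ (1 - p) ∂μ) * (∫⁻ x, a x ∂μ) ^ (p - 1) := by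
  have hp0 : 0 < p := by linarith
  have hsplit : ∀ᵐ x ∂μ, f x = (f x ^ p * a x ^ (1 - p)) ^ p⁻¹ * a x ^ (1 - p⁻¹) := by
    filter_upwards [hzero, htop] with x hx hx'
    obtain h | h := eq_or_ne (a x) 0
    · simp [hx h, hp0]
    · rw [ENNReal.mul_rpow_of_nonneg _ _ (by positivity), ENNReal.rpow_rpow_inv hp0.ne',
        ← ENNReal.rpow_mul, mul_assoc, ← ENNReal.rpow_add _ _ h hx',
        show (1 - p) * p⁻¹ + (1 - p⁻¹) = 0 by field_simp; ring, ENNReal.rpow_zero, mul_one]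
  calc (∫⁻ x, f x ∂μ) ^ p
      = (∫⁻ x, (f x ^ p * a x ^ (1 - p)) ^ p⁻¹ * a x ^ (1 - p⁻¹) ∂μ) ^ p := by
        rw [lintegral_congr_ae hsplit]
    _ ≤ ((∫⁻ x, f x ^ p * a x ^ (1 - p) ∂μ) ^ p⁻¹ * (∫⁻ x, a x ∂μ) ^ (1 - p⁻¹)) ^ p := by
        gcongr
        exact ENNReal.lintegral_mul_norm_pow_le ((hf.pow_const _).mul (ha.pow_const _)) ha
          (by positivity) (by linarith [inv_le_one_of_one_le₀ hp]) (by ring)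
    _ = _ := by
        rw [ENNReal.mul_rpow_of_nonneg _ _ hp0.le, ENNReal.rpow_inv_rpow hp0.ne',
          ← ENNReal.rpow_mul, sub_mul, inv_mul_cancel₀ hp0.ne', one_mul]

variable [SFinite μ] [SFinite ν]

lemma ae_ae_eq_zero_of_lintegral_rpow_eq_zero {f : α → β → ℝ≥0∞}
    (hf : Measurable (Function.uncurry f)) {p : ℝ} (hp : 0 < p) :
    ∀ᵐ y ∂ν, ∀ᵐ x ∂μ, ∫⁻ z, f x z ^ p ∂ν = 0 → f x y = 0 := by
  have hnorm : Measurable fun x => ∫⁻ z, f x z ^ p ∂ν := (hf.pow_const p).lintegral_prod_right'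
  rw [← Measure.ae_ae_comm (p := fun x y => ∫⁻ z, f x z ^ p ∂ν = 0 → f x y = 0)]
  · refine ae_of_all _ fun x => ?_
    by_cases h : ∫⁻ z, f x z ^ p ∂ν = 0
    · filter_upwards [(lintegral_eq_zero_iff (hf.of_uncurry_left.pow_const p)).1 h] with y hy _
      exact (ENNReal.rpow_eq_zero_iff_of_pos hp).1 hy
    · exact ae_of_all _ fun y hy => absurd hy h
  · exact (measurableSet_eq_fun (hnorm.comp measurable_fst) measurable_const).imp
      (measurableSet_eq_fun hf measurable_const)

-- Hölder against the weight `x ↦ ‖f x‖_p`, then Tonelli.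
theorem lintegral_rpow_lintegral_le {f : α → β → ℝ≥0∞} (hf : Measurable (Function.uncurry f))
    {p : ℝ} (hp : 1 ≤ p) :
    ∫⁻ y, (∫⁻ x, f x y ∂μ) ^ p ∂ν ≤ (∫⁻ x, (∫⁻ y, f x y ^ p ∂ν) ^ p⁻¹ ∂μ) ^ p := by
  have hp0 : 0 < p := by linarith
  set a : α → ℝ≥0∞ := fun x => (∫⁻ y, f x y ^ p ∂ν) ^ p⁻¹
  have hameas : Measurable a := (hf.pow_const p).lintegral_prod_right'.pow_const _
  obtain htop | htop := eq_or_ne (∫⁻ x, a x ∂μ) ∞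
  · simp [htop, hp0]
  have hatop : ∀ᵐ x ∂μ, a x ≠ ∞ := (ae_lt_top hameas htop).mono fun _ => LT.lt.ne
  have hpow : ∀ x, ∫⁻ y, f x y ^ p ∂ν = a x ^ p := fun x => (ENNReal.rpow_inv_rpow hp0.ne' _).symm
  have hzero : ∀ᵐ y ∂ν, ∀ᵐ x ∂μ, a x = 0 → f x y = 0 := by
    simpa [hpow, hp0, not_lt_of_gt hp0] using
      ae_ae_eq_zero_of_lintegral_rpow_eq_zero (μ := μ) (ν := ν) hf hp0
  calc ∫⁻ y, (∫⁻ x, f x y ∂μ) ^ p ∂ν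
      ≤ ∫⁻ y, (∫⁻ x, f x y ^ p * a x ^ (1 - p) ∂μ) * (∫⁻ x, a x ∂μ) ^ (p - 1) ∂ν := by
        refine lintegral_mono_ae (hzero.mono fun y hy => ?_)
        exact rpow_lintegral_le_lintegral_rpow_mul hf.of_uncurry_right.aemeasurable
          hameas.aemeasurable hy hatop hp
    _ = (∫⁻ x, (∫⁻ y, f x y ^ p * a x ^ (1 - p) ∂ν) ∂μ) * (∫⁻ x, a x ∂μ) ^ (p - 1) := by
        rw [lintegral_mul_const' _ _ (ENNReal.rpow_ne_top_of_nonneg (by linarith) htop),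
          lintegral_lintegral_swap]
        exact ((hf.comp measurable_swap).pow_const p |>.mul
          ((hameas.comp measurable_snd).pow_const _)).aemeasurable
    _ ≤ (∫⁻ x, a x ∂μ) * (∫⁻ x, a x ∂μ) ^ (p - 1) := by
        gcongr ?_ * _
        refine lintegral_mono_ae (hatop.mono fun x hx => ?_)
        rw [lintegral_mul_const _ (hf.of_uncurry_left.pow_const p), hpow]
        obtain h | h := eq_or_ne (a x) 0
        · simp [h, hp0]
        · rw [← ENNReal.rpow_add _ _ h hx, add_sub_cancel, ENNReal.rpow_one]
    _ = (∫⁻ x, a x ∂μ) ^ p := by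
        rw [← add_sub_cancel 1 p, ENNReal.rpow_add_of_nonneg 1 (p - 1) zero_le_one (by linarith),
          ENNReal.rpow_one, add_sub_cancel]

theorem eLpNorm_integral_le_lintegral_eLpNorm {F : Type*} [NormedAddCommGroup F] [NormedSpace ℝ F]
    {G : α → β → F} (hG : StronglyMeasurable (Function.uncurry G)) {p : ℝ} (hp : 1 ≤ p) :
    eLpNorm (fun y => ∫ x, G x y ∂μ) (ENNReal.ofReal p) ν ≤
      ∫⁻ x, eLpNorm (G x) (ENNReal.ofReal p) ν ∂μ := by
  have hp0 : 0 < p := by linarith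
  simp_rw [eLpNorm_ofReal_eq_lintegral_rpow_enorm _ hp0]
  rw [ENNReal.rpow_inv_le_iff hp0]
  calc ∫⁻ y, ‖∫ x, G x y ∂μ‖ₑ ^ p ∂ν
      ≤ ∫⁻ y, (∫⁻ x, ‖G x y‖ₑ ∂μ) ^ p ∂ν := by
        gcongr with y
        exact enorm_integral_le_lintegral_enorm _
    _ ≤ _ := lintegral_rpow_lintegral_le hG.enorm hp

end Minkowski

section LorentzDuality

variable {α : Type*} [MeasurableSpace α] {μ : Measure α}

lemma lorentzNorm_ofReal_rpow (g : α → ℝ≥0∞) {p q : ℝ} (hp : 0 < p) (hq : 0 < q) :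
    lorentzNorm μ (ENNReal.ofReal p) (ENNReal.ofReal q) g ^ q =
      ENNReal.ofReal p * ∫⁻ l in Ioi (0 : ℝ),
        (ENNReal.ofReal l * μ {x | ENNReal.ofReal l < g x} ^ p⁻¹) ^ q / ENNReal.ofReal l := by
  rw [lorentzNorm, if_neg ENNReal.ofReal_ne_top, ENNReal.toReal_inv, ENNReal.toReal_inv,
    ENNReal.toReal_ofReal hp.le, ENNReal.toReal_ofReal hq.le, ENNReal.rpow_inv_rpow hq.ne']

-- The hypothesis puts `w` in the Marcinkiewicz space dual to the Lorentz space containing `g ^ a`.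
theorem lintegral_mul_rpow_le_lorentzNorm_rpow [SFinite μ] {w g : α → ℝ≥0∞} (hw : Measurable w)
    (hg : Measurable g) {κ : ℝ≥0∞} {a θ : ℝ} (ha : 0 < a) (hθ : 0 < θ)
    (hwθ : ∀ A, MeasurableSet A → ∫⁻ x in A, w x ∂μ ≤ κ * μ A ^ θ) :
    ∫⁻ x, w x * g x ^ a ∂μ ≤
      κ * ENNReal.ofReal θ * lorentzNorm μ (ENNReal.ofReal (a / θ)) (ENNReal.ofReal a) g ^ a := by
  set m : ℝ → ℝ≥0∞ := fun l => μ {x | ENNReal.ofReal l < g x}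
  have hmeas : Measurable m := Antitone.measurable fun _ _ h =>
    measure_mono fun _ hx => (ENNReal.ofReal_le_ofReal h).trans_lt hx
  have hlayer : Measurable fun l : ℝ =>
      (ENNReal.ofReal l * m l ^ (a / θ)⁻¹) ^ a / ENNReal.ofReal l := by fun_prop
  have hlevel : ∀ l ∈ Ioi (0 : ℝ),
      ENNReal.ofReal (a * l ^ (a - 1)) * ∫⁻ x in {x | ENNReal.ofReal l < g x}, w x ∂μ ≤
        κ * ENNReal.ofReal a *
          ((ENNReal.ofReal l * m l ^ (a / θ)⁻¹) ^ a / ENNReal.ofReal l) := by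
    intro l hl
    have hl : 0 < l := hl
    have hpow : ENNReal.ofReal (l ^ (a - 1)) = ENNReal.ofReal l ^ a / ENNReal.ofReal l := by
      rw [Real.rpow_sub_one hl.ne', ENNReal.ofReal_div_of_pos hl,
        ENNReal.ofReal_rpow_of_nonneg hl.le ha.le]
    calc _ ≤ ENNReal.ofReal (a * l ^ (a - 1)) * (κ * m l ^ θ) := by
          gcongr
          exact hwθ _ (measurableSet_lt measurable_const hg)
      _ = _ := by
          rw [ENNReal.mul_rpow_of_nonneg _ _ ha.le, ← ENNReal.rpow_mul, inv_div,
            div_mul_cancel₀ _ ha.ne', ENNReal.ofReal_mul ha.le, hpow]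
          simp only [div_eq_mul_inv]
          ring
  have hconst : ENNReal.ofReal θ * ENNReal.ofReal (a / θ) = ENNReal.ofReal a := by
    rw [← ENNReal.ofReal_mul hθ.le, mul_div_cancel₀ _ hθ.ne']
  rw [lintegral_mul_rpow_eq_lintegral_Ioi hw hg ha, lorentzNorm_ofReal_rpow g (by positivity) ha,
    ← mul_assoc, mul_assoc κ, hconst, ← lintegral_const_mul _ hlayer]
  exact setLIntegral_mono' measurableSet_Ioi hlevel

lemma ofReal_rpow_neg_le_indicator_Ioc_add {α δ s : ℝ} (hα : 0 ≤ α) (hδ : 0 < δ) (hs : 0 < s) :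
    ENNReal.ofReal (s ^ (-α)) ≤
      (Ioc 0 δ).indicator (fun s => ENNReal.ofReal (s ^ ((1 - α) - 1))) s +
        ENNReal.ofReal (δ ^ (-α)) := by
  obtain hsδ | hsδ := le_or_gt s δ
  · rw [indicator_of_mem (show s ∈ Ioc 0 δ from ⟨hs, hsδ⟩), sub_sub_cancel_left]
    exact le_self_add
  · exact le_add_left (ENNReal.ofReal_le_ofReal
      (Real.rpow_le_rpow_of_nonpos hδ hsδ.le (neg_nonpos.2 hα)))

theorem setLIntegral_rpow_neg_le {α : ℝ} (hα0 : 0 ≤ α) (hα1 : α < 1) {A : Set ℝ}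
    (hA : MeasurableSet A) (hA0 : A ⊆ Ici 0) :
    ∫⁻ s in A, ENNReal.ofReal (s ^ (-α)) ≤
      ENNReal.ofReal (1 / (1 - α) + 1) * volume A ^ (1 - α) := by
  have hα : 0 < 1 - α := by linarith
  obtain htop | htop := eq_or_ne (volume A) ∞
  · simp [htop, hα, add_pos]
  obtain hzero | hzero := eq_or_ne (volume A) 0
  · simp [Measure.restrict_eq_zero.2 hzero]
  set δ := (volume A).toReal
  have hδ0 : 0 < δ := ENNReal.toReal_pos hzero htop
  have hvol : volume A = ENNReal.ofReal δ := (ENNReal.ofReal_toReal htop).symm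
  calc ∫⁻ s in A, ENNReal.ofReal (s ^ (-α))
      ≤ ∫⁻ s in A, ((Ioc 0 δ).indicator (fun s => ENNReal.ofReal (s ^ ((1 - α) - 1))) s +
          ENNReal.ofReal (δ ^ (-α))) := by
        refine lintegral_mono_ae ?_
        filter_upwards [ae_restrict_mem hA, ae_restrict_of_ae (Measure.ae_ne volume 0)]
          with s hs hs0
        exact ofReal_rpow_neg_le_indicator_Ioc_add hα0 hδ0 ((hA0 hs).lt_of_ne' hs0)
    _ = (∫⁻ s in A, (Ioc 0 δ).indicator (fun s => ENNReal.ofReal (s ^ ((1 - α) - 1))) s) +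
          ENNReal.ofReal (δ ^ (-α)) * volume A := by
        rw [lintegral_add_right _ measurable_const, setLIntegral_const]
    _ ≤ (∫⁻ s in Ioc 0 δ, ENNReal.ofReal (s ^ ((1 - α) - 1))) +
          ENNReal.ofReal (δ ^ (-α)) * volume A := by
        rw [← lintegral_indicator measurableSet_Ioc]
        gcongr
        exact Measure.restrict_le_self
    _ = ENNReal.ofReal (δ ^ (1 - α) / (1 - α) + δ ^ (-α) * δ) := by
        rw [lintegral_Ioc_rpow_sub_one hα hδ0.le, hvol, ← ENNReal.ofReal_mul (by positivity),
          ← ENNReal.ofReal_add (by positivity) (by positivity)]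
    _ = ENNReal.ofReal (1 / (1 - α) + 1) * volume A ^ (1 - α) := by
        rw [← Real.rpow_add_one hδ0.ne', neg_add_eq_sub, hvol, ENNReal.ofReal_rpow_of_pos hδ0,
          ← ENNReal.ofReal_mul (by positivity)]
        ring_nf

theorem lintegral_rpow_neg_mul_rpow_le_lorentzNorm_rpow {α : ℝ} (hα0 : 0 ≤ α) (hα1 : α < 1)
    {I : Set ℝ} (hI : MeasurableSet I) (hI0 : I ⊆ Ici 0) {g : ℝ → ℝ≥0∞} (hg : Measurable g)
    {a : ℝ} (ha : 0 < a) :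
    ∫⁻ s in I, ENNReal.ofReal (s ^ (-α)) * g s ^ a ≤
      ENNReal.ofReal (2 - α) * lorentzNorm (volume.restrict I) (ENNReal.ofReal (a / (1 - α)))
        (ENNReal.ofReal a) g ^ a := by
  have hα : 0 < 1 - α := by linarith
  have hweight : ∀ A, MeasurableSet A → ∫⁻ s in A, ENNReal.ofReal (s ^ (-α)) ∂volume.restrict I ≤
      ENNReal.ofReal (1 / (1 - α) + 1) * volume.restrict I A ^ (1 - α) := fun A hA => by
    rw [Measure.restrict_restrict hA, Measure.restrict_apply hA]
    exact setLIntegral_rpow_neg_le hα0 hα1 (hA.inter hI) (inter_subset_right.trans hI0)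
  refine (lintegral_mul_rpow_le_lorentzNorm_rpow (by fun_prop) hg ha hα hweight).trans_eq ?_
  rw [← ENNReal.ofReal_mul (by positivity)]
  congr 2
  field_simp
  ring

end LorentzDuality

section Fourier

open scoped FourierTransform SchwartzMap ContDiff

variable {E : Type*} [NormedAddCommGroup E] [InnerProductSpace ℝ E] [FiniteDimensional ℝ E]
  [MeasurableSpace E] [BorelSpace E] {F : Type*} [NormedAddCommGroup F]

section NormedSpace

variable [NormedSpace ℂ F]

theorem enorm_fourier_le_lintegral_enorm (f : E → F) (x : E) : ‖𝓕 f x‖ₑ ≤ ∫⁻ y, ‖f y‖ₑ := by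
  rw [Real.fourier_eq]
  refine (enorm_integral_le_lintegral_enorm _).trans_eq ?_
  simp_rw [← ofReal_norm, Circle.norm_smul]

theorem continuous_fourier_of_integrable {f : E → F} (hf : Integrable f) : Continuous (𝓕 f) :=
  VectorFourier.fourierIntegral_continuous Real.continuous_fourierChar
    (innerSL ℝ).continuous₂ hf

theorem fourier_add_of_integrable {f g : E → F} (hf : Integrable f) (hg : Integrable g) :
    𝓕 (f + g) = 𝓕 f + 𝓕 g :=
  VectorFourier.fourierIntegral_add Real.continuous_fourierChar (innerSL ℝ).continuous₂ hf hg

end NormedSpace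

variable [InnerProductSpace ℂ F] [CompleteSpace F]

theorem coeFn_fourier_toLp_ae_eq {f : E → F} (hf : Integrable f) (hf2 : MemLp f 2) :
    (𝓕 (hf2.toLp f) : Lp F 2 (volume : Measure E)) =ᵐ[volume] 𝓕 f := by
  refine ae_eq_of_integral_contDiff_smul_eq ((Lp.memLp _).locallyIntegrable (by norm_num))
    (continuous_fourier_of_integrable hf).locallyIntegrable fun g hg hgs => ?_
  obtain ⟨φ, hφ⟩ : ∃ φ : 𝓢(E, ℂ), ∀ x, φ x = (g x : ℂ) :=
    ⟨(hgs.comp_left (g := fun x : ℝ => (x : ℂ)) Complex.ofReal_zero).toSchwartzMap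
      (Complex.ofRealCLM.contDiff.comp hg), fun _ => rfl⟩
  have hdistr : ∫ x, (𝓕 φ) x • hf2.toLp f x =
      ∫ x, φ x • (𝓕 (hf2.toLp f) : Lp F 2 (volume : Measure E)) x := by
    simpa only [TemperedDistribution.fourier_apply, Lp.toTemperedDistribution_apply] using
      congrArg (· φ) (Lp.fourier_toTemperedDistribution_eq (hf2.toLp f))
  have hflip : ∫ x, (𝓕 φ) x • f x = ∫ x, φ x • 𝓕 f x := by
    have := VectorFourier.integral_fourierIntegral_smul_eq_flip
      (μ := (volume : Measure E)) (ν := (volume : Measure E)) (L := innerₗ E)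
      Real.continuous_fourierChar (innerSL ℝ).continuous₂ φ.integrable hf
    rwa [flip_innerₗ] at this
  calc _ = ∫ x, φ x • (𝓕 (hf2.toLp f) : Lp F 2 (volume : Measure E)) x := by simp [hφ]
    _ = ∫ x, (𝓕 φ) x • hf2.toLp f x := hdistr.symm
    _ = ∫ x, (𝓕 φ) x • f x :=
        integral_congr_ae (hf2.coeFn_toLp.mono fun x hx => by simp only [hx])
    _ = ∫ x, φ x • 𝓕 f x := hflip
    _ = _ := by simp [hφ]

theorem eLpNorm_two_fourier_eq {f : E → F} (hf : Integrable f) (hf2 : MemLp f 2) :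
    eLpNorm (𝓕 f) 2 volume = eLpNorm f 2 volume := by
  have h := Lp.norm_fourier_eq (hf2.toLp f)
  rw [Lp.norm_def, Lp.norm_def,
    ENNReal.toReal_eq_toReal_iff' (Lp.eLpNorm_ne_top _) (Lp.eLpNorm_ne_top _)] at h
  rwa [← eLpNorm_congr_ae (coeFn_fourier_toLp_ae_eq hf hf2), ← eLpNorm_congr_ae hf2.coeFn_toLp]

end Fourier

section HausdorffYoung

open scoped FourierTransform

variable {E : Type*} [NormedAddCommGroup E] [InnerProductSpace ℝ E] [FiniteDimensional ℝ E]
  [MeasurableSpace E] [BorelSpace E]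
  {F : Type*} [NormedAddCommGroup F] [InnerProductSpace ℂ F] [CompleteSpace F]

-- Split `f` along `S`: the part off `S` is controlled by `L¹ → L^∞`, the part on `S` by Plancherel.
lemma volume_lt_enorm_fourier_le {f : E → F} (hf : Integrable f) {S : Set E}
    (hS : MeasurableSet S) {l : ℝ} (hl : 0 < l)
    (hSc : ∫⁻ y in Sᶜ, ‖f y‖ₑ ≤ ENNReal.ofReal (l / 2)) :
    volume {x | ENNReal.ofReal l < ‖𝓕 f x‖ₑ} ≤
      ENNReal.ofReal (4 / l ^ 2) * ∫⁻ y in S, ‖f y‖ₑ ^ (2 : ℝ) := by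
  obtain htop | htop := eq_or_ne (∫⁻ y in S, ‖f y‖ₑ ^ (2 : ℝ)) ∞
  · rw [htop, ENNReal.mul_top (ENNReal.ofReal_pos.2 (by positivity)).ne']
    exact le_top
  have hnorm : eLpNorm (S.indicator f) 2 volume ^ (2 : ℝ) = ∫⁻ y in S, ‖f y‖ₑ ^ (2 : ℝ) := by
    rw [eLpNorm_indicator_eq_eLpNorm_restrict hS,
      eLpNorm_eq_lintegral_rpow_enorm_toReal two_ne_zero ENNReal.ofNat_ne_top,
      ENNReal.toReal_ofNat, one_div, ENNReal.rpow_inv_rpow two_ne_zero]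
  have hmem : MemLp (S.indicator f) 2 := by
    refine ⟨hf.1.indicator hS, lt_top_iff_ne_top.2 fun h => htop ?_⟩
    rw [← hnorm, h, ENNReal.top_rpow_of_pos two_pos]
  have hoff : ∀ x, ‖𝓕 (Sᶜ.indicator f) x‖ₑ ≤ ENNReal.ofReal (l / 2) := fun x => by
    refine (enorm_fourier_le_lintegral_enorm _ x).trans ?_
    simpa only [enorm_indicator_eq_indicator_enorm, lintegral_indicator hS.compl] using hSc
  have hsub : {x | ENNReal.ofReal l < ‖𝓕 f x‖ₑ} ⊆
      {x | ENNReal.ofReal (l / 2) ≤ ‖𝓕 (S.indicator f) x‖ₑ} := by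
    intro x (hx : ENNReal.ofReal l < ‖𝓕 f x‖ₑ)
    by_contra! hlt
    rw [← indicator_compl_add_self S f, fourier_add_of_integrable (hf.indicator hS.compl)
      (hf.indicator hS), ← add_halves l, ENNReal.ofReal_add (by positivity) (by positivity)] at hx
    exact absurd hx (not_lt.2 ((enorm_add_le _ _).trans (add_le_add (hoff x) (not_le.1 hlt).le)))
  calc volume {x | ENNReal.ofReal l < ‖𝓕 f x‖ₑ}
      ≤ volume {x | ENNReal.ofReal (l / 2) ≤ ‖𝓕 (S.indicator f) x‖ₑ} := measure_mono hsub
    _ ≤ (ENNReal.ofReal (l / 2))⁻¹ ^ (2 : ℝ) * eLpNorm (𝓕 (S.indicator f)) 2 volume ^ (2 : ℝ) := by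
        simpa using meas_ge_le_mul_pow_eLpNorm_enorm (volume : Measure E) two_ne_zero
          ENNReal.ofNat_ne_top
          (continuous_fourier_of_integrable (hf.indicator hS)).aestronglyMeasurable
          (ε := ENNReal.ofReal (l / 2)) (by simpa using hl) (by simp)
    _ = _ := by
        rw [eLpNorm_two_fourier_eq (hf.indicator hS) hmem, hnorm,
          ← ENNReal.ofReal_inv_of_pos (by positivity), ENNReal.rpow_ofNat,
          ← ENNReal.ofReal_pow (by positivity)]
        congr 2
        ring

lemma le_div_mul_rpow_of_div_rpow_le {n c L : ℝ≥0∞} {p : ℝ} (hp : 1 < p) (hn : n ≠ ∞)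
    (hc0 : c ≠ 0) (hc : c ≠ ∞) (h : c / n ^ (p - 1) ≤ L) :
    n ≤ L / c * n ^ p := by
  obtain rfl | hn0 := eq_or_ne n 0
  · exact zero_le
  have hm0 : n ^ (p - 1) ≠ 0 := (ENNReal.rpow_pos (pos_iff_ne_zero.2 hn0) hn).ne'
  have hm : n ^ (p - 1) ≠ ∞ := ENNReal.rpow_ne_top_of_nonneg (by linarith) hn
  calc n = c / c * n := by rw [ENNReal.div_self hc0 hc, one_mul]
    _ ≤ L * n ^ (p - 1) / c * n := by
        gcongr
        exact (ENNReal.div_le_iff_le_mul (Or.inl hm0) (Or.inl hm)).1 h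
    _ = L / c * (n ^ (p - 1) * n ^ (1 : ℝ)) := by
        rw [ENNReal.rpow_one, div_eq_mul_inv, div_eq_mul_inv]
        ring
    _ = L / c * n ^ p := by rw [← ENNReal.rpow_add _ _ hn0 hn, sub_add_cancel]

lemma sq_mul_div_rpow_rpow {n c : ℝ≥0∞} {p r : ℝ} (hr : 2 < r) (hpr : p.HolderConjugate r)
    (hn : n ≠ ∞) : n ^ (2 : ℝ) * (c / n ^ (p - 1)) ^ (r - 2) = c ^ (r - 2) * n ^ p := by
  obtain rfl | hn0 := eq_or_ne n 0
  · simp [hpr.pos]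
  have hexp : 2 - (p - 1) * (r - 2) = p := by linarith [hpr.sub_one_mul_conj]
  calc n ^ (2 : ℝ) * (c / n ^ (p - 1)) ^ (r - 2)
      = c ^ (r - 2) * (n ^ (2 : ℝ) / n ^ ((p - 1) * (r - 2))) := by
        rw [ENNReal.div_rpow_of_nonneg _ _ (by linarith), ← ENNReal.rpow_mul, div_eq_mul_inv,
          div_eq_mul_inv]
        ring
    _ = c ^ (r - 2) * n ^ p := by rw [← ENNReal.rpow_sub _ _ hn0 hn, hexp]

lemma setLIntegral_compl_le_ofReal_div_two {α : Type*} [MeasurableSpace α] {μ : Measure α}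
    {g : α → ℝ≥0∞} (hg : Measurable g) (hgtop : ∀ y, g y ≠ ∞) {p : ℝ} (hp : 1 < p) {M : ℝ≥0∞}
    (hM : ∫⁻ y, g y ^ p ∂μ = M) (hM0 : M ≠ 0) (hMtop : M ≠ ∞) (l : ℝ) :
    ∫⁻ y in {y | ENNReal.ofReal l < 2 * M / g y ^ (p - 1)}ᶜ, g y ∂μ ≤ ENNReal.ofReal (l / 2) := by
  have hS : MeasurableSet {y | ENNReal.ofReal l < 2 * M / g y ^ (p - 1)} :=
    measurableSet_lt measurable_const (by fun_prop)
  calc ∫⁻ y in {y | ENNReal.ofReal l < 2 * M / g y ^ (p - 1)}ᶜ, g y ∂μ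
      ≤ ∫⁻ y in {y | ENNReal.ofReal l < 2 * M / g y ^ (p - 1)}ᶜ,
          ENNReal.ofReal l / (2 * M) * g y ^ p ∂μ :=
        setLIntegral_mono' hS.compl fun y hy =>
          le_div_mul_rpow_of_div_rpow_le hp (hgtop y) (by simpa using hM0)
            (ENNReal.mul_ne_top ENNReal.ofNat_ne_top hMtop) (not_lt.1 hy)
    _ ≤ ∫⁻ y, ENNReal.ofReal l / (2 * M) * g y ^ p ∂μ := setLIntegral_le_lintegral _ _
    _ = ENNReal.ofReal (l / 2) := by
        rw [lintegral_const_mul _ (by fun_prop), hM, ENNReal.ofReal_div_of_pos two_pos,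
          ENNReal.ofReal_ofNat, ENNReal.div_eq_inv_mul, ENNReal.mul_inv (by simp) (by simp),
          ENNReal.div_eq_inv_mul, mul_right_comm, mul_assoc 2⁻¹, ENNReal.inv_mul_cancel hM0 hMtop,
          mul_one]

-- The level set at height `l` is estimated with `S = {y | l < 2 M / ‖f y‖ ^ (p - 1)}`, for which
-- the `L¹` norm of `f` off `S` is at most `l / 2`.
lemma lintegral_enorm_fourier_rpow_le {p r : ℝ} (hr : 2 < r) (hpr : p.HolderConjugate r)
    {f : E → F} (hfm : StronglyMeasurable f) (hf : Integrable f) {M : ℝ≥0∞}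
    (hM : ∫⁻ y, ‖f y‖ₑ ^ p = M) (hM0 : M ≠ 0) (hMtop : M ≠ ∞) :
    ∫⁻ x, ‖𝓕 f x‖ₑ ^ r ≤ ENNReal.ofReal (4 * r / (r - 2)) * ((2 * M) ^ (r - 2) * M) := by
  have hr2 : 0 < r - 2 := by linarith
  have hnorm : Measurable fun y => ‖f y‖ₑ := hfm.enorm
  set S : ℝ → Set E := fun l => {y | ENNReal.ofReal l < 2 * M / ‖f y‖ₑ ^ (p - 1)}
  have hS : ∀ l, MeasurableSet (S l) := fun l => measurableSet_lt (by fun_prop) (by fun_prop)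
  have hoff : ∀ l, ∫⁻ y in (S l)ᶜ, ‖f y‖ₑ ≤ ENNReal.ofReal (l / 2) :=
    setLIntegral_compl_le_ofReal_div_two hnorm (fun _ => enorm_ne_top) hpr.lt hM hM0 hMtop
  calc ∫⁻ x, ‖𝓕 f x‖ₑ ^ r
      = ∫⁻ l in Ioi (0 : ℝ),
          ENNReal.ofReal (r * l ^ (r - 1)) * volume {x | ENNReal.ofReal l < ‖𝓕 f x‖ₑ} := by
        simpa using lintegral_mul_rpow_eq_lintegral_Ioi (μ := (volume : Measure E))
          (measurable_const (a := 1)) (continuous_fourier_of_integrable hf).enorm.measurable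
          (show 0 < r by linarith)
    _ ≤ ∫⁻ l in Ioi (0 : ℝ), ENNReal.ofReal (4 * r / (r - 2)) *
          (ENNReal.ofReal ((r - 2) * l ^ (r - 2 - 1)) * ∫⁻ y in S l, ‖f y‖ₑ ^ (2 : ℝ)) := by
        refine setLIntegral_mono' measurableSet_Ioi fun l (hl : 0 < l) => ?_
        refine (mul_le_mul_right (volume_lt_enorm_fourier_le hf (hS l) hl (hoff l)) _).trans_eq ?_
        rw [← mul_assoc, ← mul_assoc, ← ENNReal.ofReal_mul (by positivity),
          ← ENNReal.ofReal_mul (by positivity)]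
        congr 2
        rw [Real.rpow_sub_one hl.ne', Real.rpow_sub_one hl.ne', Real.rpow_sub hl, Real.rpow_two]
        field_simp
    _ = ENNReal.ofReal (4 * r / (r - 2)) *
          ∫⁻ y, ‖f y‖ₑ ^ (2 : ℝ) * (2 * M / ‖f y‖ₑ ^ (p - 1)) ^ (r - 2) := by
        rw [lintegral_const_mul' _ _ ENNReal.ofReal_ne_top,
          lintegral_mul_rpow_eq_lintegral_Ioi (by fun_prop) (by fun_prop) hr2]
    _ = ENNReal.ofReal (4 * r / (r - 2)) * ((2 * M) ^ (r - 2) * M) := by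
        simp_rw [sq_mul_div_rpow_rpow hr hpr enorm_ne_top]
        rw [lintegral_const_mul _ (by fun_prop), hM]

lemma eLpNorm_fourier_le_mul_rpow_inv {p r : ℝ} (hr : 2 < r) (hpr : p.HolderConjugate r)
    {f : E → F} (hfm : StronglyMeasurable f) (hf : Integrable f) {M : ℝ≥0∞}
    (hM : ∫⁻ y, ‖f y‖ₑ ^ p = M) (hM0 : M ≠ 0) (hMtop : M ≠ ∞) :
    eLpNorm (𝓕 f) (ENNReal.ofReal r) volume ≤
      ENNReal.ofReal ((4 * r / (r - 2) * 2 ^ (r - 2)) ^ r⁻¹) * M ^ p⁻¹ := by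
  have hr2 : 0 < r - 2 := by linarith
  have hr0 : 0 < r := by linarith
  have hexp : (r - 2 + 1) * r⁻¹ = p⁻¹ := by
    have := hpr.inv_add_inv_eq_one
    field_simp at this ⊢
    linarith
  calc eLpNorm (𝓕 f) (ENNReal.ofReal r) volume
      = (∫⁻ x, ‖𝓕 f x‖ₑ ^ r) ^ r⁻¹ := eLpNorm_ofReal_eq_lintegral_rpow_enorm _ hr0
    _ ≤ (ENNReal.ofReal (4 * r / (r - 2)) * ((2 * M) ^ (r - 2) * M)) ^ r⁻¹ := by
        gcongr
        exact lintegral_enorm_fourier_rpow_le hr hpr hfm hf hM hM0 hMtop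
    _ = (ENNReal.ofReal (4 * r / (r - 2) * 2 ^ (r - 2)) * M ^ (r - 2 + 1)) ^ r⁻¹ := by
        rw [ENNReal.mul_rpow_of_nonneg _ _ hr2.le, ENNReal.rpow_add _ _ hM0 hMtop,
          ENNReal.rpow_one, ENNReal.ofReal_mul (by positivity),
          ← ENNReal.ofReal_rpow_of_pos two_pos, ENNReal.ofReal_ofNat]
        ring_nf
    _ = _ := by
        rw [ENNReal.mul_rpow_of_nonneg _ _ (by positivity), ← ENNReal.rpow_mul, hexp,
          ENNReal.ofReal_rpow_of_nonneg (by positivity) (by positivity)]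

theorem eLpNorm_fourier_le {r : ℝ} (hr : 2 < r) :
    ∃ C : ℝ, 0 < C ∧ ∀ {p : ℝ}, p.HolderConjugate r → ∀ {f : E → F}, Integrable f →
      eLpNorm (𝓕 f) (ENNReal.ofReal r) volume ≤
        ENNReal.ofReal C * eLpNorm f (ENNReal.ofReal p) volume := by
  have : 0 < r - 2 := by linarith
  have : 0 < r := by linarith
  refine ⟨(4 * r / (r - 2) * 2 ^ (r - 2)) ^ r⁻¹, by positivity, fun {p} hpr {f} hf => ?_⟩
  wlog hfm : StronglyMeasurable f generalizing f
  · have hae := hf.1.ae_eq_mk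
    rw [eLpNorm_congr_ae hae, funext (Real.fourier_congr_ae hae)]
    exact this (hf.congr hae) hf.1.stronglyMeasurable_mk
  rw [eLpNorm_ofReal_eq_lintegral_rpow_enorm _ hpr.pos]
  set M := ∫⁻ y, ‖f y‖ₑ ^ p with hM
  obtain hM0 | hM0 := eq_or_ne M 0
  · have hf0 : f =ᵐ[volume] 0 := by
      simpa [hpr.pos, hpr.nonneg, Filter.EventuallyEq] using
        (lintegral_eq_zero_iff (hfm.enorm.pow_const p)).1 hM0
    have hfourier : 𝓕 f = 0 := by
      rw [funext (Real.fourier_congr_ae hf0)]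
      ext x
      simp [Real.fourier_eq]
    simp [hfourier]
  obtain hMtop | hMtop := eq_or_ne M ∞
  · rw [hMtop, ENNReal.top_rpow_of_pos hpr.inv_pos,
      ENNReal.mul_top (ENNReal.ofReal_pos.2 (by positivity)).ne']
    exact le_top
  exact eLpNorm_fourier_le_mul_rpow_inv hr hpr hfm hf hM.symm hM0 hMtop

end HausdorffYoung

section Dispersive

open scoped FourierTransform

variable {E : Type*} [NormedAddCommGroup E]

/-- The quadratic phase `e^{i|y|²/(4t)}`, the kernel of `e^{itΔ}` without its normalising factor. -/
def chirp (t : ℝ) (y : E) : ℂ :=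
  Complex.exp (Complex.I * ((‖y‖ ^ 2 : ℝ) : ℂ) / (4 * (t : ℂ)))

lemma norm_chirp (t : ℝ) (y : E) : ‖chirp t y‖ = 1 := by
  have h : Complex.I * ((‖y‖ ^ 2 : ℝ) : ℂ) / (4 * (t : ℂ)) =
      ((‖y‖ ^ 2 / (4 * t) : ℝ) : ℂ) * Complex.I := by
    push_cast
    ring
  rw [chirp, h, Complex.norm_exp_ofReal_mul_I]

lemma continuous_chirp (t : ℝ) : Continuous (chirp t : E → ℂ) := by
  unfold chirp
  fun_prop

lemma schrod_apply_of_ne_zero [MeasureSpace E] (d : ℕ) {t : ℝ} (ht : t ≠ 0) (f : E → ℂ) (x : E) :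
    schrod d t f x =
      (4 * (π : ℂ) * Complex.I * (t : ℂ)) ^ (-(d : ℂ) / 2) * ∫ y, chirp t (x - y) * f y := by
  rw [schrod, if_neg ht]
  rfl

lemma integrable_mul_iff_of_norm_eq_one {α : Type*} [MeasurableSpace α] {μ : Measure α}
    {φ f : α → ℂ} (hφ : AEStronglyMeasurable φ μ) (hφ1 : ∀ y, ‖φ y‖ = 1)
    (hf : AEStronglyMeasurable f μ) : Integrable (fun y => φ y * f y) μ ↔ Integrable f μ := by
  rw [← integrable_norm_iff (f := fun y => φ y * f y) (hφ.mul hf), ← integrable_norm_iff hf]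
  simp_rw [norm_mul, hφ1, one_mul]

lemma schrod_eq_zero_of_not_integrable [MeasureSpace E] [OpensMeasurableSpace E]
    [SecondCountableTopology E] (d : ℕ) {t : ℝ} (ht : t ≠ 0) {f : E → ℂ}
    (hf : AEStronglyMeasurable f) (hfi : ¬ Integrable f) : schrod d t f = 0 := by
  ext x
  have hchirp : AEStronglyMeasurable fun y : E => chirp t (x - y) :=
    ((continuous_chirp t).comp (continuous_sub_left x)).aestronglyMeasurable
  rw [schrod_apply_of_ne_zero d ht, integral_undef, mul_zero, Pi.zero_apply]
  rwa [integrable_mul_iff_of_norm_eq_one hchirp (fun y => norm_chirp t _) hf]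

variable [InnerProductSpace ℝ E]

lemma chirp_sub {t : ℝ} (ht : t ≠ 0) (x y : E) :
    chirp t (x - y) = chirp t x *
      (Complex.exp (↑(-2 * π * inner ℝ y ((4 * π * t)⁻¹ • x)) * Complex.I) * chirp t y) := by
  have ht' : (t : ℂ) ≠ 0 := Complex.ofReal_ne_zero.2 ht
  have hπ : (π : ℂ) ≠ 0 := Complex.ofReal_ne_zero.2 Real.pi_ne_zero
  rw [chirp, chirp, chirp, ← Complex.exp_add, ← Complex.exp_add, norm_sub_sq_real,
    inner_smul_right, real_inner_comm]
  push_cast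
  congr 1
  field_simp
  ring

variable [FiniteDimensional ℝ E] [MeasurableSpace E] [BorelSpace E]

lemma norm_schrod_eq (d : ℕ) {t : ℝ} (ht : t ≠ 0) (f : E → ℂ) (x : E) :
    ‖schrod d t f x‖ = (4 * π * |t|) ^ (-(d / 2 : ℝ)) *
      ‖𝓕 (fun y => chirp t y * f y) ((4 * π * t)⁻¹ • x)‖ := by
  have hconst : ‖(4 * (π : ℂ) * Complex.I * (t : ℂ)) ^ (-(d : ℂ) / 2)‖ =
      (4 * π * |t|) ^ (-(d / 2 : ℝ)) := by
    rw [show -(d : ℂ) / 2 = ((-(d / 2) : ℝ) : ℂ) by push_cast; ring, Complex.norm_cpow_real]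
    simp [abs_of_pos Real.pi_pos]
  have hfactor : ∫ y, chirp t (x - y) * f y =
      chirp t x * 𝓕 (fun y => chirp t y * f y) ((4 * π * t)⁻¹ • x) := by
    simp_rw [Real.fourier_eq', smul_eq_mul, chirp_sub ht x, mul_assoc, integral_const_mul]
  rw [schrod_apply_of_ne_zero d ht, norm_mul, hconst, hfactor, norm_mul, norm_chirp, one_mul]

lemma eLpNorm_comp_const_smul {F : Type*} [NormedAddCommGroup F] (g : E → F) {p : ℝ} (hp : 0 < p)
    {a : ℝ} (ha : a ≠ 0) :
    eLpNorm (fun x => g (a • x)) (ENNReal.ofReal p) volume =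
      ENNReal.ofReal (|a| ^ (-(Module.finrank ℝ E / p))) *
        eLpNorm g (ENNReal.ofReal p) volume := by
  have hemb : MeasurableEmbedding fun x : E => a • x :=
    (Homeomorph.smulOfNeZero a ha).measurableEmbedding
  have hscale : ∫⁻ x, ‖g (a • x)‖ₑ ^ p =
      ENNReal.ofReal (|a| ^ (-(Module.finrank ℝ E : ℝ))) * ∫⁻ x, ‖g x‖ₑ ^ p := by
    rw [← hemb.lintegral_map (fun x => ‖g x‖ₑ ^ p), Measure.map_addHaar_smul _ ha,
      lintegral_smul_measure, smul_eq_mul, abs_inv, abs_pow, Real.rpow_neg (abs_nonneg a),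
      Real.rpow_natCast]
  rw [eLpNorm_ofReal_eq_lintegral_rpow_enorm _ hp, eLpNorm_ofReal_eq_lintegral_rpow_enorm _ hp,
    hscale, ENNReal.mul_rpow_of_nonneg _ _ (by positivity),
    ENNReal.ofReal_rpow_of_nonneg (by positivity) (by positivity), ← Real.rpow_mul (abs_nonneg a),
    neg_mul, ← div_eq_mul_inv]

/-- The decay exponent `d (1/2 - 1/r)` of `e^{itΔ} : L^{r'}(ℝ^d) → L^r(ℝ^d)`. -/
def dispersionExponent (d : ℕ) (r : ℝ) : ℝ := d * (1 / 2 - 1 / r)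

lemma dispersionExponent_nonneg (d : ℕ) {r : ℝ} (hr : 2 ≤ r) : 0 ≤ dispersionExponent d r :=
  mul_nonneg d.cast_nonneg (sub_nonneg.2 (one_div_le_one_div_of_le two_pos hr))

lemma eLpNorm_schrod_eq {t : ℝ} (ht : t ≠ 0) (f : E → ℂ) {r : ℝ} (hr : 0 < r) :
    eLpNorm (schrod (Module.finrank ℝ E) t f) (ENNReal.ofReal r) volume =
      ENNReal.ofReal ((4 * π * |t|) ^ (-dispersionExponent (Module.finrank ℝ E) r)) *
        eLpNorm (𝓕 fun y => chirp t y * f y) (ENNReal.ofReal r) volume := by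
  set d := Module.finrank ℝ E
  set a : ℝ := 4 * π * t with ha_def
  have ha : a ≠ 0 := by positivity
  have habs : 4 * π * |t| = |a| := by
    rw [ha_def, abs_mul, abs_of_pos (by positivity : 0 < 4 * π)]
  calc eLpNorm (schrod d t f) (ENNReal.ofReal r) volume
      = eLpNorm (|a| ^ (-(d / 2 : ℝ)) •
          fun x => (𝓕 fun y => chirp t y * f y) (a⁻¹ • x)) (ENNReal.ofReal r) volume := by
        refine eLpNorm_congr_norm_ae (ae_of_all _ fun x => ?_)
        rw [norm_schrod_eq d ht, habs, Pi.smul_apply, norm_smul,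
          Real.norm_of_nonneg (by positivity)]
    _ = ENNReal.ofReal (|a| ^ (-(d / 2 : ℝ))) * (ENNReal.ofReal (|a⁻¹| ^ (-(d / r))) *
          eLpNorm (𝓕 fun y => chirp t y * f y) (ENNReal.ofReal r) volume) := by
        rw [eLpNorm_const_smul, eLpNorm_comp_const_smul _ hr (inv_ne_zero ha),
          Real.enorm_of_nonneg (by positivity)]
    _ = _ := by
        rw [← mul_assoc, ← ENNReal.ofReal_mul (by positivity), habs, abs_inv,
          Real.inv_rpow (abs_nonneg a), ← Real.rpow_neg (abs_nonneg a),
          ← Real.rpow_add (abs_pos.2 ha), dispersionExponent]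
        congr 3
        ring

theorem eLpNorm_schrod_le {r : ℝ} (hr : 2 < r) :
    ∃ C : ℝ, 0 < C ∧ ∀ {p : ℝ}, p.HolderConjugate r → ∀ {t : ℝ}, t ≠ 0 →
      ∀ {f : E → ℂ}, AEStronglyMeasurable f →
        eLpNorm (schrod (Module.finrank ℝ E) t f) (ENNReal.ofReal r) volume ≤
          ENNReal.ofReal (C * |t| ^ (-dispersionExponent (Module.finrank ℝ E) r)) *
            eLpNorm f (ENNReal.ofReal p) volume := by
  obtain ⟨C, hC, hfourier⟩ := eLpNorm_fourier_le (E := E) (F := ℂ) hr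
  set δ := dispersionExponent (Module.finrank ℝ E) r
  refine ⟨(4 * π) ^ (-δ) * C, by positivity, fun {p} hpr {t} ht {f} hf => ?_⟩
  by_cases hfi : Integrable f
  · have hmod : ∀ y, ‖chirp t y * f y‖ = ‖f y‖ := fun y => by rw [norm_mul, norm_chirp, one_mul]
    have hint : Integrable fun y => chirp t y * f y :=
      (integrable_mul_iff_of_norm_eq_one (continuous_chirp t).aestronglyMeasurable
        (norm_chirp t) hf).2 hfi
    calc eLpNorm (schrod (Module.finrank ℝ E) t f) (ENNReal.ofReal r) volume
        = ENNReal.ofReal ((4 * π * |t|) ^ (-δ)) *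
            eLpNorm (𝓕 fun y => chirp t y * f y) (ENNReal.ofReal r) volume :=
          eLpNorm_schrod_eq ht f (by linarith)
      _ ≤ ENNReal.ofReal ((4 * π * |t|) ^ (-δ)) *
            (ENNReal.ofReal C * eLpNorm (fun y => chirp t y * f y) (ENNReal.ofReal p) volume) := by
          gcongr
          exact hfourier hpr hint
      _ = _ := by
          rw [eLpNorm_congr_norm_ae (ae_of_all _ hmod), ← mul_assoc,
            ← ENNReal.ofReal_mul (by positivity), Real.mul_rpow (by positivity) (abs_nonneg t),
            mul_right_comm]
  · rw [schrod_eq_zero_of_not_integrable _ ht hf hfi, eLpNorm_zero]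
    exact zero_le

end Dispersive

section Nonlinearity

variable {α : Type*} [MeasurableSpace α]

theorem eLpNorm_nonlin_le {μ : Measure α} {f : α → ℂ} (hf : AEStronglyMeasurable f μ) {a : ℝ}
    (ha : 0 < a) {s p q : ℝ≥0∞} [ENNReal.HolderTriple s p q] :
    eLpNorm (nonlin a f) q μ ≤ eLpNorm f (s * ENNReal.ofReal a) μ ^ a * eLpNorm f p μ := by
  have hsmul : nonlin a f = (fun x => ‖f x‖ ^ a) • f := by
    ext x
    simp only [nonlin, Pi.smul_apply', Complex.real_smul]
  rw [hsmul, ← eLpNorm_norm_rpow f ha]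
  exact eLpNorm_smul_le_mul_eLpNorm hf (hf.norm.aemeasurable.pow_const a).aestronglyMeasurable

lemma measurable_nonlin {f : α → ℂ} (hf : Measurable f) (a : ℝ) : Measurable (nonlin a f) := by
  unfold nonlin
  fun_prop

end Nonlinearity

section Measurability

variable {β : Type*} [MeasurableSpace β]

lemma measurable_eLpNorm_of_uncurry {α F : Type*} [MeasurableSpace α] {μ : Measure α} [SFinite μ]
    [NormedAddCommGroup F] {u : β → α → F} (hu : StronglyMeasurable (Function.uncurry u)) {p : ℝ}
    (hp : 0 < p) : Measurable fun s => eLpNorm (u s) (ENNReal.ofReal p) μ := by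
  simp_rw [eLpNorm_ofReal_eq_lintegral_rpow_enorm _ hp]
  exact (hu.enorm.pow_const p).lintegral_prod_right'.pow_const _

lemma measurable_uncurry_schrod {E : Type*} [NormedAddCommGroup E] [MeasureSpace E] [BorelSpace E]
    [SecondCountableTopology E] [SFinite (volume : Measure E)] (d : ℕ) {τ : β → ℝ}
    (hτ : Measurable τ) {v : β → E → ℂ} (hv : Measurable (Function.uncurry v)) :
    Measurable (Function.uncurry fun s => schrod d (τ s) (v s)) := by
  have hkernel : Measurable fun z : (β × E) × E =>
      Complex.exp (Complex.I * ((‖z.1.2 - z.2‖ ^ 2 : ℝ) : ℂ) / (4 * (τ z.1.1 : ℂ))) *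
        Function.uncurry v (z.1.1, z.2) := by
    fun_prop
  have hif : (Function.uncurry fun s => schrod d (τ s) (v s)) = fun z : β × E =>
      if τ z.1 = 0 then Function.uncurry v z
      else (4 * (π : ℂ) * Complex.I * (τ z.1 : ℂ)) ^ (-(d : ℂ) / 2) *
        ∫ y, Complex.exp (Complex.I * ((‖z.2 - y‖ ^ 2 : ℝ) : ℂ) / (4 * (τ z.1 : ℂ))) *
          Function.uncurry v (z.1, y) := by
    ext z
    simp only [Function.uncurry, schrod]
    split_ifs <;> rfl
  rw [hif]
  refine Measurable.ite (measurableSet_eq_fun (by fun_prop) measurable_const) hv ?_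
  exact Measurable.mul (by fun_prop) hkernel.stronglyMeasurable.integral_prod_right'.measurable

end Measurability

section EarlyTime

lemma ae_le_rpow_neg_mul_iSup_rpow_mul (N : ℝ → ℝ≥0∞) (δ : ℝ) {I : Set ℝ}
    (hI : MeasurableSet I) (hI0 : I ⊆ Ici 0) :
    ∀ᵐ s ∂volume.restrict I,
      N s ≤ ENNReal.ofReal (s ^ (-δ)) * ⨆ σ ∈ I, ENNReal.ofReal (σ ^ δ) * N σ := by
  filter_upwards [ae_restrict_mem hI, ae_restrict_of_ae (Measure.ae_ne volume 0)] with s hs hs0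
  have hspos : 0 < s := (hI0 hs).lt_of_ne' hs0
  calc N s = ENNReal.ofReal (s ^ (-δ)) * (ENNReal.ofReal (s ^ δ) * N s) := by
        rw [← mul_assoc, ← ENNReal.ofReal_mul (by positivity), ← Real.rpow_add hspos,
          neg_add_cancel, Real.rpow_zero, ENNReal.ofReal_one, one_mul]
    _ ≤ _ := by
        gcongr
        exact le_iSup₂ (f := fun σ _ => ENNReal.ofReal (σ ^ δ) * N σ) s hs

lemma rpow_neg_le_two_rpow_mul_rpow_neg {t τ δ : ℝ} (ht : 0 < t) (hτ : t / 2 ≤ τ) (hδ : 0 ≤ δ) :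
    τ ^ (-δ) ≤ 2 ^ δ * t ^ (-δ) :=
  calc τ ^ (-δ) ≤ (t / 2) ^ (-δ) :=
        Real.rpow_le_rpow_of_nonpos (by positivity) hτ (neg_nonpos.2 hδ)
    _ = 2 ^ δ * t ^ (-δ) := by
        rw [Real.div_rpow ht.le two_pos.le, Real.rpow_neg two_pos.le, div_inv_eq_mul, mul_comm]

variable {E : Type*} [NormedAddCommGroup E] [InnerProductSpace ℝ E] [FiniteDimensional ℝ E]
  [MeasurableSpace E] [BorelSpace E]

theorem eLpNorm_schrod_nonlin_le {r a : ℝ} (hr : 2 < r) (ha : 0 < a) :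
    ∃ C : ℝ, 0 < C ∧ ∀ {t : ℝ}, t ≠ 0 → ∀ {f : E → ℂ}, Measurable f →
      eLpNorm (schrod (Module.finrank ℝ E) t (nonlin a f)) (ENNReal.ofReal r) volume ≤
        ENNReal.ofReal (C * |t| ^ (-dispersionExponent (Module.finrank ℝ E) r)) *
          (eLpNorm f (ENNReal.ofReal (a * r / (r - 2))) volume ^ a *
            eLpNorm f (ENNReal.ofReal r) volume) := by
  obtain ⟨C, hC, hdisp⟩ := eLpNorm_schrod_le (E := E) hr
  have : 0 < r - 2 := by linarith
  have hr1 : 0 < r - 1 := by linarith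
  have hconj : (r / (r - 1)).HolderConjugate r :=
    (Real.HolderConjugate.conjExponent (by linarith)).symm
  have : ENNReal.HolderTriple (ENNReal.ofReal (r / (r - 2))) (ENNReal.ofReal r)
      (ENNReal.ofReal (r / (r - 1))) := ⟨by
    rw [← ENNReal.ofReal_inv_of_pos (by positivity), ← ENNReal.ofReal_inv_of_pos (by positivity),
      ← ENNReal.ofReal_inv_of_pos (by positivity), ← ENNReal.ofReal_add (by positivity)
      (by positivity)]
    congr 1
    field_simp
    ring⟩
  refine ⟨C, hC, fun {t} ht {f} hf => ?_⟩
  refine (hdisp hconj ht (measurable_nonlin hf a).aestronglyMeasurable).trans ?_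
  gcongr
  have hexp : ENNReal.ofReal (r / (r - 2)) * ENNReal.ofReal a =
      ENNReal.ofReal (a * r / (r - 2)) := by
    rw [← ENNReal.ofReal_mul (by positivity)]
    ring_nf
  rw [← hexp]
  exact eLpNorm_nonlin_le hf.aestronglyMeasurable ha

theorem eLpNorm_schrod_sub_nonlin_le {r a : ℝ} (hr : 2 < r) (ha : 0 < a) :
    ∃ C : ℝ, 0 < C ∧ ∀ {t s : ℝ}, 0 < t → s ≤ t / 2 → ∀ {f : E → ℂ}, Measurable f →
      eLpNorm (schrod (Module.finrank ℝ E) (t - s) (nonlin a f)) (ENNReal.ofReal r) volume ≤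
        ENNReal.ofReal (C * t ^ (-dispersionExponent (Module.finrank ℝ E) r)) *
          (eLpNorm f (ENNReal.ofReal (a * r / (r - 2))) volume ^ a *
            eLpNorm f (ENNReal.ofReal r) volume) := by
  obtain ⟨C, hC, hbound⟩ := eLpNorm_schrod_nonlin_le (E := E) hr ha
  have hδ := dispersionExponent_nonneg (Module.finrank ℝ E) hr.le
  set δ := dispersionExponent (Module.finrank ℝ E) r
  refine ⟨C * 2 ^ δ, by positivity, fun {t s} ht hs {f} hf => ?_⟩
  have hts : 0 < t - s := by linarith
  refine (hbound hts.ne' hf).trans ?_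
  rw [abs_of_pos hts, mul_assoc C]
  gcongr
  exact rpow_neg_le_two_rpow_mul_rpow_neg ht (by linarith) hδ

theorem early_time_duhamel_2d_general {d : ℕ} (hd : Module.finrank ℝ E = d) {r a : ℝ} (hr : 2 < r)
    (ha : 0 < a) (hδ : dispersionExponent d r < 1) :
    ∃ C : ℝ, 0 < C ∧
      ∀ t : ℝ, 0 < t →
        ∀ I : Set ℝ, MeasurableSet I → I ⊆ Set.Icc 0 (t / 2) →
          ∀ u : ℝ → E → ℂ, Measurable (Function.uncurry u) →
            eLpNorm (fun x => ∫ s in I, schrod d (t - s) (nonlin a (u s)) x)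
                (ENNReal.ofReal r) volume ≤
              ENNReal.ofReal (C * t ^ (-dispersionExponent d r)) *
                (⨆ s ∈ I, ENNReal.ofReal (s ^ dispersionExponent d r) *
                  eLpNorm (u s) (ENNReal.ofReal r) volume) *
                lorentzMixedNorm volume I (ENNReal.ofReal (a / (1 - dispersionExponent d r)))
                    (ENNReal.ofReal a) (ENNReal.ofReal (a * r / (r - 2))) u ^ a := by
  subst hd
  obtain ⟨C, hC, hpointwise⟩ := eLpNorm_schrod_sub_nonlin_le (E := E) hr ha
  have hδ0 := dispersionExponent_nonneg (Module.finrank ℝ E) hr.le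
  set d := Module.finrank ℝ E
  set δ := dispersionExponent d r
  refine ⟨C * (2 - δ), mul_pos hC (by linarith), fun t ht I hI hIt u hu => ?_⟩
  have hI0 : I ⊆ Ici 0 := fun s hs => (hIt hs).1
  set A := ⨆ s ∈ I, ENNReal.ofReal (s ^ δ) * eLpNorm (u s) (ENNReal.ofReal r) volume
  set g : ℝ → ℝ≥0∞ := fun s => eLpNorm (u s) (ENNReal.ofReal (a * r / (r - 2))) volume
  have hg : Measurable g := measurable_eLpNorm_of_uncurry hu.stronglyMeasurable
    (div_pos (by positivity) (by linarith))
  have hnonlin : Measurable (Function.uncurry fun s => nonlin a (u s)) := measurable_nonlin hu a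
  set K := ENNReal.ofReal (C * t ^ (-δ))
  have htime : ∀ᵐ s ∂volume.restrict I,
      eLpNorm (schrod d (t - s) (nonlin a (u s))) (ENNReal.ofReal r) volume ≤
        K * A * (ENNReal.ofReal (s ^ (-δ)) * g s ^ a) := by
    filter_upwards [ae_restrict_mem hI, ae_le_rpow_neg_mul_iSup_rpow_mul
      (fun s => eLpNorm (u s) (ENNReal.ofReal r) volume) δ hI hI0] with s hs hus
    calc eLpNorm (schrod d (t - s) (nonlin a (u s))) (ENNReal.ofReal r) volume
        ≤ K * (g s ^ a * eLpNorm (u s) (ENNReal.ofReal r) volume) :=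
          hpointwise ht (hIt hs).2 (hu.comp measurable_prodMk_left)
      _ ≤ K * (g s ^ a * (ENNReal.ofReal (s ^ (-δ)) * A)) := by gcongr
      _ = _ := by ring
  calc eLpNorm (fun x => ∫ s in I, schrod d (t - s) (nonlin a (u s)) x) (ENNReal.ofReal r) volume
      ≤ ∫⁻ s in I, eLpNorm (schrod d (t - s) (nonlin a (u s))) (ENNReal.ofReal r) volume :=
        eLpNorm_integral_le_lintegral_eLpNorm
          (measurable_uncurry_schrod d (by fun_prop) hnonlin).stronglyMeasurable (by linarith)
    _ ≤ ∫⁻ s in I, K * A * (ENNReal.ofReal (s ^ (-δ)) * g s ^ a) := lintegral_mono_ae htime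
    _ = K * A * ∫⁻ s in I, ENNReal.ofReal (s ^ (-δ)) * g s ^ a :=
        lintegral_const_mul _ (by fun_prop)
    _ ≤ K * A * (ENNReal.ofReal (2 - δ) * lorentzNorm (volume.restrict I)
          (ENNReal.ofReal (a / (1 - δ))) (ENNReal.ofReal a) g ^ a) := by
        gcongr
        exact lintegral_rpow_neg_mul_rpow_le_lorentzNorm_rpow hδ0 hδ hI hI0 hg ha
    _ = _ := by
        rw [mul_right_comm C, ENNReal.ofReal_mul (by positivity), lorentzMixedNorm]
        ring

end EarlyTime

/-- **Two-dimensional early-time Duhamel estimate.**  Fix `2 < r < ∞` and set `q = 2r/(r-2)`.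
For any `t > 0`, any measurable interval `I ⊆ [0, t/2]`, and any measurable `u` on `I × ℝ²`,
`‖∫_I e^{i(t-s)Δ}(|u|²u)(s) ds‖_{L^r_x} ≤ C t^{-2(1/2-1/r)}
  (sup_{s∈I} s^{2(1/2-1/r)} ‖u(s)‖_{L^r_x}) ‖u‖²_{L^{r,2}_s L^q_x(I×ℝ²)}`, with `C = C(r)`. -/
theorem early_time_duhamel_2d (r : ℝ) (hr : 2 < r) :
    ∃ C : ℝ, 0 < C ∧
      ∀ t : ℝ, 0 < t →
        ∀ I : Set ℝ, MeasurableSet I → I.OrdConnected → I ⊆ Set.Icc 0 (t / 2) →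
          ∀ u : ℝ → EuclideanSpace ℝ (Fin 2) → ℂ, Measurable (Function.uncurry u) →
            eLpNorm (fun x => ∫ s in I, schrod 2 (t - s) (nonlin 2 (u s)) x)
                (ENNReal.ofReal r) volume ≤
              ENNReal.ofReal (C * t ^ (-(2 * (1 / 2 - 1 / r)))) *
                (⨆ s ∈ I, ENNReal.ofReal (s ^ (2 * (1 / 2 - 1 / r))) *
                  eLpNorm (u s) (ENNReal.ofReal r) volume) *
                lorentzMixedNorm volume I (ENNReal.ofReal r) 2
                    (ENNReal.ofReal (2 * r / (r - 2))) u ^ 2 := by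
  have hδ : dispersionExponent 2 r = 2 * (1 / 2 - 1 / r) := by norm_num [dispersionExponent]
  have : 0 < r := by linarith
  have hpos : 0 < 1 / r := by positivity
  have hexp : 2 / (1 - 2 * (1 / 2 - 1 / r)) = r := by
    field_simp
    ring
  obtain ⟨C, hC, hbound⟩ := early_time_duhamel_2d_general (E := EuclideanSpace ℝ (Fin 2))
    finrank_euclideanSpace_fin hr two_pos (by linarith)
  refine ⟨C, hC, fun t ht I hI _ hIt u hu => ?_⟩
  simpa only [hδ, hexp, ENNReal.ofReal_ofNat, ENNReal.rpow_ofNat] using hbound t ht I hI hIt u hu
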